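/- Let n ≥ 3, 2 ≤ j ≤ ⌈n/2⌉, δ = (1 2), r = (1 2 … n) in S_n, and dist the word metric with respect to {δ, r, r^{-1}}. Let π ∈ S_n and let ξ reverse the first j entries of π's one-line notation. Then dist(π r^{j-2}, ξ r^{⌈j/2⌉ - 1}) = j(j-1) - 1. -/

import Mathlib

/-- The transposition `δ = (1 2)` in `S_n` (0-indexed: swaps `0` and `1`). -/
def delta (n : ℕ) (hn : 2 ≤ n) : Equiv.Perm (Fin n) :=
  Equiv.swap ⟨0, by omega⟩ ⟨1, by omega⟩

/-- The symmetric generating set `{(1 2), (1 2 … n), (1 n … 2)}` of `S_n`. -/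
def gens (n : ℕ) (hn : 2 ≤ n) : Set (Equiv.Perm (Fin n)) :=
  {delta n hn, finRotate n, (finRotate n)⁻¹}

/-- `IsMinWordLen n hn g d` says that `d` is the minimal length of a word in the
generators `{(1 2), (1 2 … n), (1 n … 2)}` whose product is `g`; i.e. the distance
in the Cayley graph from `1` to `g` is exactly `d`. -/
def IsMinWordLen (n : ℕ) (hn : 2 ≤ n) (g : Equiv.Perm (Fin n)) (d : ℕ) : Prop :=
  (∃ l : List (Equiv.Perm (Fin n)),
      (∀ x ∈ l, x ∈ gens n hn) ∧ l.prod = g ∧ l.length = d) ∧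
  (∀ l : List (Equiv.Perm (Fin n)),
      (∀ x ∈ l, x ∈ gens n hn) → l.prod = g → d ≤ l.length)

lemma papply_inv {n : ℕ} (f : Equiv.Perm (Fin n)) (a : Fin n) : f (f⁻¹ a) = a :=
  Equiv.apply_symm_apply f a

lemma rot_val (n : ℕ) (a : Fin n) :
    (finRotate n a).val = if a.val + 1 = n then 0 else a.val + 1 := by
  cases n with
  | zero => exact a.elim0
  | succ m =>
    split_ifs with h
    · have : a = Fin.last m := Fin.ext (by simpa using h)
      rw [this, finRotate_last]; rfl
    · rw [coe_finRotate_of_ne_last]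
      intro h'; apply h; rw [h']; simp

lemma rot_inv_val (n : ℕ) (a : Fin n) :
    ((finRotate n)⁻¹ a).val = if a.val = 0 then n - 1 else a.val - 1 := by
  have h := rot_val n ((finRotate n)⁻¹ a)
  rw [papply_inv] at h
  have := ((finRotate n)⁻¹ a).isLt
  split_ifs at h ⊢ <;> omega

lemma rot_pow_val (n k : ℕ) (a : Fin n) (h : a.val + k < n) :
    ((finRotate n ^ k) a).val = a.val + k := by
  induction k with
  | zero => simp
  | succ k ih =>
    rw [pow_succ', Equiv.Perm.mul_apply, rot_val, ih (by omega)]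
    split_ifs <;> omega

/-- There is a word of length `L` leading from `r^k` to `x r^m`. -/
def WPath (n : ℕ) (hn : 2 ≤ n) (k m L : ℕ) (x : Equiv.Perm (Fin n)) : Prop :=
  ∃ l : List (Equiv.Perm (Fin n)), (∀ y ∈ l, y ∈ gens n hn) ∧
    finRotate n ^ k * l.prod = x * finRotate n ^ m ∧ l.length = L

lemma WPath.trans {n : ℕ} {hn : 2 ≤ n} {k m p L M : ℕ} {x y : Equiv.Perm (Fin n)}
    (h1 : WPath n hn k m L x) (h2 : WPath n hn m p M y) :
    WPath n hn k p (L + M) (x * y) := by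
  obtain ⟨l1, a1, b1, c1⟩ := h1
  obtain ⟨l2, a2, b2, c2⟩ := h2
  refine ⟨l1 ++ l2, ?_, ?_, by simp [c1, c2]⟩
  · intro z hz
    rcases List.mem_append.1 hz with h | h
    · exact a1 z h
    · exact a2 z h
  · rw [List.prod_append, ← mul_assoc, b1, mul_assoc, b2, mul_assoc]

lemma WPath.up {n : ℕ} {hn : 2 ≤ n} (k : ℕ) : WPath n hn k (k + 1) 1 1 :=
  ⟨[finRotate n], by simp [gens], by simp [pow_succ], rfl⟩

lemma WPath.down {n : ℕ} {hn : 2 ≤ n} (k : ℕ) : WPath n hn (k + 1) k 1 1 :=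
  ⟨[(finRotate n)⁻¹], by simp [gens], by simp [pow_succ], rfl⟩

lemma WPath.swp {n : ℕ} {hn : 2 ≤ n} (k : ℕ) (h : k + 1 < n) :
    WPath n hn k k 1 (Equiv.swap ⟨k, by omega⟩ ⟨k + 1, h⟩) := by
  refine ⟨[delta n hn], by simp [gens], ?_, rfl⟩
  rw [List.prod_singleton, delta, Equiv.mul_swap_eq_swap_mul]
  congr 2
  · apply Fin.ext; rw [rot_pow_val] <;> simp <;> omega
  · apply Fin.ext; rw [rot_pow_val] <;> simp <;> omega

lemma WPath.transp {n : ℕ} {hn : 2 ≤ n} (o d : ℕ) (h : o + (d + 1) < n) :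
    WPath n hn (o + d) (o + d) (4 * d + 1)
      (Equiv.swap ⟨o, by omega⟩ ⟨o + (d + 1), h⟩) := by
  induction d with
  | zero => exact WPath.swp o h
  | succ d ih =>
    have h1 := WPath.swp (hn := hn) (o + (d + 1)) (by omega)
    have h2 := ((h1.trans (WPath.down (o + d))).trans (ih (by omega))).trans
      ((WPath.up (o + d)).trans h1)
    convert h2 using 1
    · omega
    · simp only [mul_one, one_mul]
      ext p
      simp only [Equiv.Perm.mul_apply, Equiv.swap_apply_def, Fin.ext_iff, apply_ite Fin.val]
      split_ifs <;> omega

lemma WPath.rev {n : ℕ} {hn : 2 ≤ n} (j : ℕ) : ∀ (o : ℕ), o + (j + 2) ≤ n →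
    ∀ x : Equiv.Perm (Fin n),
    (∀ p : Fin n, (x p).val = if o ≤ p.val ∧ p.val < o + (j + 2)
      then 2 * o + j + 1 - p.val else p.val) →
    WPath n hn (o + j) (o + (j + 1) / 2) ((j + 2) * (j + 1) - 1) x := by
  induction j using Nat.strong_induction_on with
  | _ j ih =>
  intro o ho x hx
  have ht := WPath.transp (hn := hn) o j (by omega)
  set t : Equiv.Perm (Fin n) := Equiv.swap ⟨o, by omega⟩ ⟨o + (j + 1), by omega⟩ with htd
  have htv : ∀ p : Fin n, (t p).val = if p.val = o then o + (j + 1)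
      else if p.val = o + (j + 1) then o else p.val := by
    intro p
    rw [htd, Equiv.swap_apply_def]
    simp only [Fin.ext_iff]
    split_ifs <;> rfl
  rcases Nat.lt_or_ge j 2 with hj | hj
  · have : x = t := by
      ext p
      rw [hx, htv]
      split_ifs <;> omega
    rw [this]
    convert ht using 1
    · omega
    · clear * - hj
      interval_cases j <;> rfl
  · obtain ⟨i, rfl⟩ : ∃ i, j = i + 2 := ⟨j - 2, by omega⟩
    have h3 := ih i (by omega) (o + 1) (by omega) (t * x) (by
      intro p
      rw [Equiv.Perm.mul_apply, htv, hx]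
      have := p.isLt
      split_ifs <;> omega)
    have h4 := (ht.trans (WPath.down (o + (i + 1)))).trans
      (by rw [show o + (i + 1) = o + 1 + i by omega]; exact h3)
    convert h4 using 1
    · omega
    · have : 1 ≤ (i + 2) * (i + 1) := Nat.mul_pos (by omega) (by omega)
      zify [this, show 1 ≤ (i + 2 + 2) * (i + 2 + 1) from Nat.mul_pos (by omega) (by omega)]
      ring
    · rw [mul_one, ← mul_assoc, Equiv.swap_mul_self, one_mul]

/-! ### Lower bound -/

/-- contribution of a pair of tokens -/
def tm {n : ℕ} (g : Equiv.Perm (Fin n)) (q : Fin n → ℤ) (a b : Fin n) : ℤ :=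
  if a < b then |q b - q a - (if g⁻¹ b < g⁻¹ a then 1 else 0)| else 0

/-- affine length of a lift -/
def Psi {n : ℕ} (g : Equiv.Perm (Fin n)) (q : Fin n → ℤ) : ℤ :=
  ∑ a, ∑ b, tm g q a b

lemma Psi_rot {n : ℕ} (g : Equiv.Perm (Fin n)) (q : Fin n → ℤ) :
    ∃ q', ∀ a b, tm (g * finRotate n) q' a b = tm g q a b := by
  refine ⟨fun a => if (g⁻¹ a).val = 0 then q a - 1 else q a, fun a b => ?_⟩
  unfold tm
  by_cases hab : a < b
  · rw [if_pos hab, if_pos hab]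
    congr 1
    have hne : (g⁻¹ a).val ≠ (g⁻¹ b).val := fun h =>
      hab.ne (g⁻¹.injective (Fin.ext h))
    simp only [mul_inv_rev, Equiv.Perm.mul_apply, Fin.lt_def, rot_inv_val]
    have := (g⁻¹ a).isLt
    have := (g⁻¹ b).isLt
    split_ifs <;> omega
  · rw [if_neg hab, if_neg hab]

lemma Psi_rot_inv {n : ℕ} (g : Equiv.Perm (Fin n)) (q : Fin n → ℤ) :
    ∃ q', ∀ a b, tm (g * (finRotate n)⁻¹) q' a b = tm g q a b := by
  refine ⟨fun a => if (g⁻¹ a).val + 1 = n then q a + 1 else q a, fun a b => ?_⟩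
  unfold tm
  by_cases hab : a < b
  · rw [if_pos hab, if_pos hab]
    congr 1
    have hne : (g⁻¹ a).val ≠ (g⁻¹ b).val := fun h =>
      hab.ne (g⁻¹.injective (Fin.ext h))
    simp only [mul_inv_rev, inv_inv, Equiv.Perm.mul_apply, Fin.lt_def, rot_val]
    have := (g⁻¹ a).isLt
    have := (g⁻¹ b).isLt
    split_ifs <;> omega
  · rw [if_neg hab, if_neg hab]

lemma Psi_delta {n : ℕ} (hn : 2 ≤ n) (g : Equiv.Perm (Fin n)) (q : Fin n → ℤ) :
    Psi (g * delta n hn) q ≤ Psi g q + 1 := by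
  set u := g ⟨0, by omega⟩ with hu
  set v := g ⟨1, by omega⟩ with hv
  have key : ∀ a b, tm (g * delta n hn) q a b ≤ tm g q a b +
      if a = min u v then (if b = max u v then 1 else 0) else 0 := by
    intro a b
    unfold tm
    by_cases hab : a < b
    · rw [if_pos hab, if_pos hab]
      have ha : (delta n hn (g⁻¹ a)).val = if (g⁻¹ a).val = 0 then 1 else
          if (g⁻¹ a).val = 1 then 0 else (g⁻¹ a).val := by
        rw [delta, Equiv.swap_apply_def]; simp only [Fin.ext_iff]; split_ifs <;> rfl
      have hb : (delta n hn (g⁻¹ b)).val = if (g⁻¹ b).val = 0 then 1 else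
          if (g⁻¹ b).val = 1 then 0 else (g⁻¹ b).val := by
        rw [delta, Equiv.swap_apply_def]; simp only [Fin.ext_iff]; split_ifs <;> rfl
      have hne : (g⁻¹ a).val ≠ (g⁻¹ b).val := fun h =>
        hab.ne (g⁻¹.injective (Fin.ext h))
      have e0 : ∀ c, (g⁻¹ c).val = 0 → c = u := by
        intro c hc; rw [hu, ← Equiv.Perm.inv_eq_iff_eq]; exact Fin.ext hc
      have e1 : ∀ c, (g⁻¹ c).val = 1 → c = v := by
        intro c hc; rw [hv, ← Equiv.Perm.inv_eq_iff_eq]; exact Fin.ext hc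
      have hd : (delta n hn)⁻¹ = delta n hn := Equiv.swap_inv _ _
      simp only [mul_inv_rev, hd, Equiv.Perm.mul_apply, Fin.lt_def, ha, hb]
      by_cases c1 : (g⁻¹ a).val = 0 ∧ (g⁻¹ b).val = 1
      · have h1 := e0 _ c1.1
        have h2 := e1 _ c1.2
        rw [← h1, ← h2, min_eq_left hab.le, max_eq_right hab.le]
        simp only [c1.1, c1.2]
        simp
        rw [abs_le]
        constructor <;> [have := neg_abs_le (q b - q a); have := le_abs_self (q b - q a)] <;>
          [skip; linarith]
        rcases abs_cases (q b - q a) with h | h <;> omega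
      by_cases c2 : (g⁻¹ a).val = 1 ∧ (g⁻¹ b).val = 0
      · have h1 := e1 _ c2.1
        have h2 := e0 _ c2.2
        rw [← h1, ← h2, min_eq_right hab.le, max_eq_left hab.le]
        simp only [c2.1, c2.2]
        simp
        rcases abs_cases (q b - q a) with h | h <;>
        rcases abs_cases (q b - q a - 1) with h' | h' <;> omega
      · refine le_add_of_le_of_nonneg (le_of_eq ?_) (by split_ifs <;> simp)
        congr 2
        split_ifs <;> omega
    · rw [if_neg hab, if_neg hab]
      split_ifs <;> simp
  calc Psi (g * delta n hn) q ≤ ∑ a, ∑ b, (tm g q a b +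
      if a = min u v then (if b = max u v then 1 else 0) else 0) :=
        Finset.sum_le_sum fun a _ => Finset.sum_le_sum fun b _ => key a b
    _ = Psi g q + 1 := by
        simp only [Finset.sum_add_distrib, Psi]
        congr 1
        rw [Finset.sum_eq_single (min u v)] <;> simp +contextual

lemma word_bound {n : ℕ} (hn : 2 ≤ n) (g0 : Equiv.Perm (Fin n))
    (h0 : ∃ q, Psi g0 q = 0) (l : List (Equiv.Perm (Fin n))) (hl : ∀ x ∈ l, x ∈ gens n hn) :
    ∃ q, 2 * Psi (g0 * l.prod) q ≤ l.length + 1 ∧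
      2 * Psi (g0 * l.prod * delta n hn) q ≤ l.length + 2 := by
  induction l using List.reverseRecOn with
  | nil =>
    obtain ⟨q, hq⟩ := h0
    refine ⟨q, ?_, ?_⟩
    · simp [hq]
    · have := Psi_delta hn g0 q
      simp; omega
  | append_singleton l x ih =>
    obtain ⟨q, h1, h2⟩ := ih (fun y hy => hl y (by simp [hy]))
    have hx : x ∈ gens n hn := hl x (by simp)
    have hp : g0 * (l ++ [x]).prod = g0 * l.prod * x := by simp [mul_assoc]
    have hlen : ((l ++ [x]).length : ℤ) = l.length + 1 := by simp
    rw [hp, hlen]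
    rcases hx with rfl | rfl | rfl
    · refine ⟨q, by omega, ?_⟩
      have hd : delta n hn * delta n hn = 1 := Equiv.swap_mul_self _ _
      rw [mul_assoc (g0 * l.prod), hd, mul_one]; omega
    · obtain ⟨q', hq'⟩ := Psi_rot (g0 * l.prod) q
      have e : Psi (g0 * l.prod * finRotate n) q' = Psi (g0 * l.prod) q := by
        simp only [Psi, hq']
      have := Psi_delta hn (g0 * l.prod * finRotate n) q'
      exact ⟨q', by omega, by omega⟩
    · obtain ⟨q', hq'⟩ := Psi_rot_inv (g0 * l.prod) q
      have e : Psi (g0 * l.prod * (finRotate n)⁻¹) q' = Psi (g0 * l.prod) q := by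
        simp only [Psi, hq']
      have := Psi_delta hn (g0 * l.prod * (finRotate n)⁻¹) q'
      exact ⟨q', by omega, by omega⟩

lemma Psi_rot_pow {n : ℕ} (g : Equiv.Perm (Fin n)) (k : ℕ) (q : Fin n → ℤ) :
    ∃ q', Psi (g * finRotate n ^ k) q' = Psi g q := by
  induction k with
  | zero => exact ⟨q, by simp⟩
  | succ k ih =>
    obtain ⟨q1, h1⟩ := ih
    obtain ⟨q2, h2⟩ := Psi_rot (g * finRotate n ^ k) q1
    refine ⟨q2, ?_⟩
    rw [← h1, pow_succ, ← mul_assoc]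
    simp only [Psi, h2]

lemma Psi_rot_inv_pow {n : ℕ} (g : Equiv.Perm (Fin n)) (k : ℕ) (q : Fin n → ℤ) :
    ∃ q', Psi (g * (finRotate n)⁻¹ ^ k) q' = Psi g q := by
  induction k with
  | zero => exact ⟨q, by simp⟩
  | succ k ih =>
    obtain ⟨q1, h1⟩ := ih
    obtain ⟨q2, h2⟩ := Psi_rot_inv (g * (finRotate n)⁻¹ ^ k) q1
    refine ⟨q2, ?_⟩
    rw [← h1, pow_succ, ← mul_assoc]
    simp only [Psi, h2]

lemma Psi_one {n : ℕ} : Psi (1 : Equiv.Perm (Fin n)) 0 = 0 := by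
  unfold Psi
  refine Finset.sum_eq_zero fun a _ => Finset.sum_eq_zero fun b _ => ?_
  unfold tm
  by_cases h : a < b
  · have h' : ¬ ((1 : Equiv.Perm (Fin n))⁻¹ b < (1 : Equiv.Perm (Fin n))⁻¹ a) := not_lt.2 h.le
    rw [if_pos h, if_neg h']
    simp
  · rw [if_neg h]

lemma pair_sum (f : ℕ → ℤ) (j : ℕ) :
    ∑ b ∈ Finset.range j, ∑ a ∈ Finset.range b, (f a + f b) =
      ((j : ℤ) - 1) * ∑ a ∈ Finset.range j, f a := by
  induction j with
  | zero => simp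
  | succ j ih =>
    rw [Finset.sum_range_succ, ih, Finset.sum_range_succ, Finset.sum_add_distrib]
    simp
    ring

lemma pair_card (j : ℕ) :
    2 * ∑ b ∈ Finset.range j, ∑ _a ∈ Finset.range b, (1 : ℤ) = (j : ℤ) * (j - 1) := by
  induction j with
  | zero => simp
  | succ j ih =>
    rw [Finset.sum_range_succ, mul_add, ih]
    simp
    ring

lemma combin (j B : ℕ) (hB : j ≤ B + 1) (hB0 : 0 < B) (Q : ℕ → ℤ) :
    (j : ℤ) * (j - 1) ≤ 2 * (∑ b ∈ Finset.range j, ∑ a ∈ Finset.range b, |Q b - Q a - 1| +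
      ∑ l ∈ Finset.range B, ∑ a ∈ Finset.range j, |Q (j + l) - Q a|) := by
  set X := ∑ b ∈ Finset.range j, ∑ a ∈ Finset.range b, |Q b - Q a - 1|
  set Y := ∑ l ∈ Finset.range B, ∑ a ∈ Finset.range j, |Q (j + l) - Q a| with hY
  have hY0 : 0 ≤ Y := Finset.sum_nonneg fun _ _ => Finset.sum_nonneg fun _ _ => abs_nonneg _
  have h1 : ∀ l ∈ Finset.range B,
      ∑ b ∈ Finset.range j, ∑ _a ∈ Finset.range b, (1 : ℤ) ≤
      X + ((j : ℤ) - 1) * ∑ a ∈ Finset.range j, |Q (j + l) - Q a| := by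
    intro l _
    rw [← pair_sum (fun a => |Q (j + l) - Q a|), ← Finset.sum_add_distrib]
    refine Finset.sum_le_sum fun b _ => ?_
    rw [← Finset.sum_add_distrib]
    refine Finset.sum_le_sum fun a _ => ?_
    rcases abs_cases (Q b - Q a - 1) with h | h <;>
    rcases abs_cases (Q (j + l) - Q a) with h' | h' <;>
    rcases abs_cases (Q (j + l) - Q b) with h'' | h'' <;> omega
  have h2 := Finset.sum_le_sum h1
  rw [Finset.sum_add_distrib, ← Finset.mul_sum, ← hY] at h2
  simp only [Finset.sum_const, Finset.card_range, nsmul_eq_mul] at h2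
  have h3 := pair_card j
  simp only [Finset.sum_const, Finset.card_range, nsmul_eq_mul] at h3
  set C := ∑ b ∈ Finset.range j, ((b : ℤ) * 1)
  have hB' : (j : ℤ) - 1 ≤ B := by omega
  have h4 : (B : ℤ) * C ≤ B * (X + Y) := by nlinarith
  have h5 := le_of_mul_le_mul_left h4 (by exact_mod_cast hB0)
  linarith

lemma Psi_rev {n : ℕ} (j : ℕ) (hj : 2 ≤ j) (hjn : j ≤ (n + 1) / 2) (hn : 3 ≤ n)
    (x : Equiv.Perm (Fin n))
    (hx : ∀ p : Fin n, (x⁻¹ p).val = if p.val < j then j - 1 - p.val else p.val)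
    (q : Fin n → ℤ) : (j : ℤ) * (j - 1) ≤ 2 * Psi x q := by
  obtain ⟨B, rfl⟩ : ∃ B, n = j + B := ⟨n - j, by omega⟩
  set Q : ℕ → ℤ := fun i => if h : i < j + B then q ⟨i, h⟩ else 0 with hQ
  refine (combin j B (by omega) (by omega) Q).trans ?_
  have hq : ∀ a : Fin (j + B), q a = Q a.val := by
    intro a; simp [hQ]
  have hP : Psi x q = ∑ b ∈ Finset.range (j + B), ∑ a ∈ Finset.range (j + B),
      if a < b then |Q b - Q a - (if b < j then 1 else 0)| else 0 := by
    rw [Psi, Finset.sum_comm, ← Fin.sum_univ_eq_sum_range]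
    refine Finset.sum_congr rfl fun b _ => ?_
    rw [← Fin.sum_univ_eq_sum_range (fun a => if a < b.val then
      |Q b.val - Q a - (if b.val < j then 1 else 0)| else 0)]
    refine Finset.sum_congr rfl fun a _ => ?_
    unfold tm
    simp only [Fin.lt_def, hx, hq]
    by_cases hab : a.val < b.val
    · rw [if_pos hab, if_pos hab]
      congr 2
      split_ifs <;> omega
    · rw [if_neg hab, if_neg hab]
  rw [hP, Finset.sum_range_add]
  gcongr with b hb l hl
  · refine le_of_eq ?_
    rw [← Finset.sum_subset (s₁ := Finset.range b) (s₂ := Finset.range (j + B))]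
    · refine Finset.sum_congr rfl fun a ha => ?_
      rw [if_pos (Finset.mem_range.1 ha), if_pos (Finset.mem_range.1 hb)]
    · intro a; simp at hb ⊢; omega
    · intro a _ ha; rw [if_neg (by simpa using ha)]
  · rw [Finset.sum_range_add]
    refine le_add_of_le_of_nonneg ?_ ?_
    · refine Finset.sum_le_sum fun a ha => ?_
      have := Finset.mem_range.1 ha
      rw [if_pos (by omega), if_neg (by omega), sub_zero]
    · refine Finset.sum_nonneg fun a _ => ?_
      split_ifs <;> first | exact abs_nonneg _ | exact le_rfl

/-- For `n ≥ 3`, `2 ≤ j ≤ ⌈n/2⌉`, any `π ∈ S_n`, and `ξ` the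
permutation reversing the first `j` entries of `π`'s one-line notation, the word
metric with respect to `{(1 2), r, r⁻¹}` satisfies
`dist(π r^(j-2), ξ r^(⌈j/2⌉ - 1)) = j(j-1) - 1`. -/
theorem stmt15 (n : ℕ) (hn : 3 ≤ n) (j : ℕ) (hj1 : 2 ≤ j) (hj2 : j ≤ (n + 1) / 2)
    (π ξ : Equiv.Perm (Fin n))
    (hξ : ∀ p : Fin n, ξ p =
      if h : (p : ℕ) < j then π ⟨j - 1 - (p : ℕ), by omega⟩ else π p) :
    IsMinWordLen n (by omega)
      ((π * (finRotate n) ^ (j - 2))⁻¹ * (ξ * (finRotate n) ^ ((j + 1) / 2 - 1)))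
      (j * (j - 1) - 1) := by
  have hx : ∀ p : Fin n, ((π⁻¹ * ξ) p).val = if p.val < j then j - 1 - p.val else p.val := by
    intro p
    rw [Equiv.Perm.mul_apply, hξ]
    split_ifs <;> simp
  have hjj : (1 : ℕ) ≤ j * (j - 1) := Nat.mul_pos (by omega) (by omega)
  constructor
  · obtain ⟨i, rfl⟩ : ∃ i, j = i + 2 := ⟨j - 2, by omega⟩
    obtain ⟨l, h1, h2, h3⟩ := WPath.rev (hn := (by omega : 2 ≤ n)) i 0 (by omega) (π⁻¹ * ξ) (by
      intro p
      rw [hx]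
      split_ifs <;> omega)
    refine ⟨l, h1, ?_, h3⟩
    rw [show i + 2 - 2 = 0 + i by omega, show (i + 2 + 1) / 2 - 1 = 0 + (i + 1) / 2 by omega,
      mul_inv_rev, mul_assoc, eq_inv_mul_iff_mul_eq, h2, mul_assoc]
  · intro l hl hp
    obtain ⟨q0, hq0⟩ := Psi_rot_pow (1 : Equiv.Perm (Fin n)) (j - 2) 0
    rw [Psi_one, one_mul] at hq0
    obtain ⟨q, hq, -⟩ := word_bound (by omega) (finRotate n ^ (j - 2)) ⟨q0, hq0⟩ l hl
    have e : finRotate n ^ (j - 2) * l.prod = (π⁻¹ * ξ) * finRotate n ^ ((j + 1) / 2 - 1) := by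
      rw [hp]; group
    rw [e] at hq
    obtain ⟨q', hq'⟩ := Psi_rot_inv_pow
      ((π⁻¹ * ξ) * finRotate n ^ ((j + 1) / 2 - 1)) ((j + 1) / 2 - 1) q
    rw [mul_assoc, inv_pow, mul_inv_cancel, mul_one] at hq'
    have hb := Psi_rev j hj1 hj2 hn (π⁻¹ * ξ) (by
      intro p
      have h1 := hx ((π⁻¹ * ξ)⁻¹ p)
      rw [papply_inv] at h1
      split_ifs at h1 ⊢ <;> omega) q'
    rw [hq'] at hb
    have : (j * (j - 1) : ℕ) ≤ l.length + 1 := by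
      zify [show 1 ≤ j by omega]
      linarith
    omega
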